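/- Let G be a chain graph with chain components 𝒯 and let ≺₁ and ≺₂ be two strict total orders of 𝒯 both consistent with G. Then a strictly positive joint probability mass function p obeys the multivariate regression Markov property for G with respect to ≺₁ if and only if it obeys it with respect to ≺₂; i.e., the multivariate regression Markov property depends only on the chain graph G and not on the chosen consistent ordering. -/

import Mathlib

open scoped Classical BigOperators

/-- A mixed graph on a node set `V`: a set of directed edges and a symmetric
irreflexive set of undirected edges, the two edge sets being disjoint. -/
structure MixedGraph (V : Type*) where
  dir : V → V → Prop
  undir : V → V → Prop
  undir_symm : ∀ {a b}, undir a b → undir b a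
  undir_irrefl : ∀ a, ¬ undir a a
  edge_disjoint : ∀ a b, dir a b → ¬ undir a b

namespace MixedGraph

variable {V : Type*} [Fintype V] [DecidableEq V] (G : MixedGraph V)

/-- One step of a semi-directed path: an undirected edge or a directed edge
followed in the direction of traversal. -/
def step (a b : V) : Prop := G.dir a b ∨ G.undir a b

/-- No semi-directed cycle: there is no directed edge `a → b` together with a
semi-directed path from `b` back to `a`. -/
def NoSemiDirectedCycle : Prop :=
  ∀ a b : V, G.dir a b → ¬ Relation.ReflTransGen G.step b a

/-- Two nodes are in the same chain component iff they are joined by a path of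
undirected edges (the equivalence relation generated by the undirected part). -/
def sameComp (a b : V) : Prop := Relation.ReflTransGen G.undir a b

/-- The chain component of a node. -/
noncomputable def component (v : V) : Finset V :=
  Finset.univ.filter fun w => G.sameComp v w

/-- `T` is a chain component of `G`. -/
def IsComponent (T : Finset V) : Prop := ∃ v, T = G.component v

/-- The collection of chain components of `G`. -/
noncomputable def componentsF : Finset (Finset V) :=
  Finset.univ.image fun v => G.component v

/-- The parents `pa_G(A)`: nodes outside `A` with a directed edge into `A`. -/
noncomputable def paG (A : Finset V) : Finset V :=
  Finset.univ.filter fun w => w ∉ A ∧ ∃ v ∈ A, G.dir w v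

/-- The (inclusive) neighbours `Nb_G(A)`: `A` together with all nodes joined to
`A` by an undirected edge. -/
noncomputable def nbG (A : Finset V) : Finset V :=
  A ∪ Finset.univ.filter fun w => ∃ v ∈ A, G.undir v w

/-- The edge relation of the directed graph `D` of chain components:
`T₁ → T₂` iff they are distinct chain components and `G` has a directed edge
from a node of `T₁` to a node of `T₂`. -/
def dirD (T₁ T₂ : Finset V) : Prop :=
  G.IsComponent T₁ ∧ G.IsComponent T₂ ∧ T₁ ≠ T₂ ∧ ∃ v ∈ T₁, ∃ w ∈ T₂, G.dir v w

/-- `pa_D(T)`: the union of the parent components of `T` in `D`. -/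
noncomputable def paD (T : Finset V) : Finset V :=
  Finset.univ.filter fun w => G.dirD (G.component w) T

/-- `nd_D(T)`: the union of the components `T'` such that there is no directed
path from `T` to `T'` in `D`. -/
noncomputable def ndD (T : Finset V) : Finset V :=
  Finset.univ.filter fun w => ¬ Relation.ReflTransGen G.dirD T (G.component w)

/-- A set of nodes `A` is connected if the subgraph of the undirected part of
`G` induced by `A` is connected (in particular nonempty). -/
def ConnectedIn (A : Finset V) : Prop :=
  A.Nonempty ∧ ∀ a ∈ A, ∀ b ∈ A,
    Relation.ReflTransGen (fun x y => x ∈ A ∧ y ∈ A ∧ G.undir x y) a b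

/-- The connected component of `v` inside the induced subgraph on `A`. -/
noncomputable def compIn (A : Finset V) (v : V) : Finset V :=
  A.filter fun w =>
    Relation.ReflTransGen (fun x y => x ∈ A ∧ y ∈ A ∧ G.undir x y) v w

/-- The set of connected components of the induced subgraph on `A`. -/
noncomputable def connComps (A : Finset V) : Finset (Finset V) :=
  A.image fun v => G.compIn A v

/-- `ord` is a strict total order of the chain components consistent with `G`:
`ord T T'` implies that `T` is not a parent component of `T'`. -/
def ConsistentOrder (ord : Finset V → Finset V → Prop) : Prop :=
  (∀ T₁ T₂, G.IsComponent T₁ → G.IsComponent T₂ → T₁ ≠ T₂ →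
      ord T₁ T₂ ∨ ord T₂ T₁) ∧
  (∀ T, G.IsComponent T → ¬ ord T T) ∧
  (∀ T₁ T₂ T₃, G.IsComponent T₁ → G.IsComponent T₂ → G.IsComponent T₃ →
      ord T₁ T₂ → ord T₂ T₃ → ord T₁ T₃) ∧
  (∀ T₁ T₂, G.IsComponent T₁ → G.IsComponent T₂ → ord T₁ T₂ → ¬ G.dirD T₁ T₂)

/-- `pre(T)`: the union of all the chain components `T'` with `T ≺ T'`
(the predecessors, i.e. the past, of `T`). -/
noncomputable def pre (ord : Finset V → Finset V → Prop) (T : Finset V) :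
    Finset V :=
  Finset.univ.filter fun w => ord T (G.component w)

end MixedGraph

/-- A cell of the joint contingency table: variable `v` takes one of the
levels `0, …, r v - 1` (level `0` playing the role of the first level `1`). -/
abbrev Cell {V : Type*} (r : V → ℕ) := ∀ v : V, Fin (r v)

variable {V : Type*} [Fintype V] [DecidableEq V] {r : V → ℕ}

/-- The marginal probability `p_S(i_S)` (as a function of a full cell `i`,
depending on it only through the coordinates in `S`). -/
noncomputable def marginal (p : Cell r → ℝ) (S : Finset V) (i : Cell r) : ℝ :=
  ∑ j : Cell r, if ∀ v ∈ S, j v = i v then p j else 0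

/-- The conditional probability `p_{A|B}(i_A | i_B)`. -/
noncomputable def condProb (p : Cell r → ℝ) (A B : Finset V) (i : Cell r) : ℝ :=
  marginal p (A ∪ B) i / marginal p B i

/-- `p` is a strictly positive joint probability mass function. -/
def IsPosPMF (p : Cell r → ℝ) : Prop :=
  (∀ i, 0 < p i) ∧ ∑ i : Cell r, p i = 1

/-- Conditional independence `A ⊥ B | C`. -/
def CondIndep (p : Cell r → ℝ) (A B C : Finset V) : Prop :=
  ∀ i : Cell r,
    marginal p (A ∪ B ∪ C) i * marginal p C i =
      marginal p (A ∪ C) i * marginal p (B ∪ C) i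

/-- The cell agreeing with `i` on `S` and equal to the first (reference)
level outside `S`. -/
def splice (hr : ∀ v, 2 ≤ r v) (S : Finset V) (i : Cell r) : Cell r :=
  fun v => if v ∈ S then i v else ⟨0, by have := hr v; omega⟩

/-- The conditional multivariate logistic contrast
`η^{(A)}(i_A | i_B) = Σ_{s ⊆ A} (−1)^{|A∖s|} log p_{A|B}((i_s, 1_{A∖s}) | i_B)`. -/
noncomputable def mlContrast (hr : ∀ v, 2 ≤ r v) (p : Cell r → ℝ)
    (A B : Finset V) (i : Cell r) : ℝ :=
  ∑ s ∈ A.powerset,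
    (-1 : ℝ) ^ (A \ s).card * Real.log (condProb p A B (splice hr (s ∪ B) i))

/-- The multivariate regression (MR) Markov property for the chain graph `G`
with respect to the consistent ordering `ord`: for every chain component `T`
and every nonempty `A ⊆ T`, (MR1) if `A` is connected then
`A ⊥ (pre(T)∖pa_G(A)) | pa_G(A)`, and (MR2) if `A` is disconnected then its
connected components are mutually independent given `pre(T)`. -/
def MRMarkov (G : MixedGraph V) (ord : Finset V → Finset V → Prop)
    (p : Cell r → ℝ) : Prop :=
  ∀ T : Finset V, G.IsComponent T → ∀ A ⊆ T, A.Nonempty →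
    (G.ConnectedIn A →
      CondIndep p A (G.pre ord T \ G.paG A) (G.paG A)) ∧
    (¬ G.ConnectedIn A →
      ∀ i : Cell r,
        condProb p A (G.pre ord T) i =
          ∏ Aj ∈ G.connComps A, condProb p Aj (G.pre ord T) i)

/-- The block-recursive Markov property of type IV for the chain graph `G`:
(IV0) `T ⊥ (nd_D(T)∖pa_D(T)) | pa_D(T)`;
(IV1) `A ⊥ (pa_D(T)∖pa_G(A)) | pa_G(A)` for all `A ⊆ T`;
(IV2) `A ⊥ (T∖Nb_G(A)) | pa_D(T)` for all connected `A ⊆ T`. -/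
def TypeIVMarkov (G : MixedGraph V) (p : Cell r → ℝ) : Prop :=
  (∀ T : Finset V, G.IsComponent T →
      CondIndep p T (G.ndD T \ G.paD T) (G.paD T)) ∧
  (∀ T : Finset V, G.IsComponent T → ∀ A ⊆ T,
      CondIndep p A (G.paD T \ G.paG A) (G.paG A)) ∧
  (∀ T : Finset V, G.IsComponent T → ∀ A ⊆ T, G.ConnectedIn A →
      CondIndep p A (T \ G.nbG A) (G.paD T))

/-!
Call `S` a possible past of a chain component `T` if it is closed under taking parents and
undirected neighbours, is disjoint from `T`, and contains the parents of `T`. The Markov property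
with respect to `≺` says that every `A ⊆ T` has conditional law `∏ p_{B | pa(B)}` given `pre(T)`,
the product running over the connected components `B` of `A`. This formula then holds given every
possible past `S`, a condition that does not involve `≺`. To see this, induct on `S` and let `C` be
the `≺`-least component of `T ∪ S`, so that the other components lie in `pre(C)`. If `C = T`, then
`S ⊆ pre(T)`, and the formula passes to the smaller conditioning set because the product only
involves `A` and `S`. If `C ⊆ S`, then `T ∪ (S ∖ C) ⊆ pre(C)`, so `C` is independent of `A` given
`S ∖ C`, and `C` can be dropped from the conditioning set.
-/

namespace MixedGraph

variable {G : MixedGraph V} {ord : Finset V → Finset V → Prop} {A B S T : Finset V} {v w : V}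

section

omit [Fintype V] [DecidableEq V]

theorem sameComp_symm (h : G.sameComp v w) : G.sameComp w v :=
  have : Std.Symm G.undir := ⟨fun _ _ => G.undir_symm⟩
  symm_of (Relation.ReflTransGen G.undir) h

theorem compIn_subset : G.compIn A v ⊆ A :=
  Finset.filter_subset _ _

theorem connectedIn_compIn (hv : v ∈ A) : G.ConnectedIn (G.compIn A v) := by
  let edge (x y : V) : Prop := x ∈ G.compIn A v ∧ y ∈ G.compIn A v ∧ G.undir x y
  have : Std.Symm edge := ⟨fun _ _ h => ⟨h.2.1, h.1, G.undir_symm h.2.2⟩⟩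
  have path_from_root : ∀ a ∈ G.compIn A v, Relation.ReflTransGen edge v a := by
    intro a ha
    have path_in_A := (Finset.mem_filter.1 ha).2
    clear ha
    induction path_in_A with
    | refl => exact .refl
    | tail hvb hbc ih =>
      exact ih.tail ⟨Finset.mem_filter.2 ⟨hbc.1, hvb⟩,
        Finset.mem_filter.2 ⟨hbc.2.1, hvb.tail hbc⟩, hbc.2.2⟩
  exact ⟨⟨v, Finset.mem_filter.2 ⟨hv, .refl⟩⟩, fun a ha b hb =>
    (symm_of (Relation.ReflTransGen edge) (path_from_root a ha)).trans (path_from_root b hb)⟩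

end

section

omit [Fintype V]

theorem subset_of_mem_connComps (hB : B ∈ G.connComps A) : B ⊆ A := by
  obtain ⟨v, -, rfl⟩ := Finset.mem_image.1 hB
  exact compIn_subset

theorem connectedIn_of_mem_connComps (hB : B ∈ G.connComps A) : G.ConnectedIn B := by
  obtain ⟨v, hv, rfl⟩ := Finset.mem_image.1 hB
  exact connectedIn_compIn hv

theorem ConnectedIn.connComps_eq (hA : G.ConnectedIn A) : G.connComps A = {A} := by
  have compIn_eq : ∀ v ∈ A, G.compIn A v = A := fun v hv =>
    Finset.filter_true_of_mem fun w hw => hA.2 v hv w hw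
  rw [connComps, Finset.image_congr compIn_eq, Finset.image_const hA.1]

end

section

omit [DecidableEq V]

theorem mem_component : w ∈ G.component v ↔ G.sameComp v w := by
  simp [component]

theorem mem_component_self (v : V) : v ∈ G.component v :=
  mem_component.2 .refl

theorem component_eq_of_mem (h : w ∈ G.component v) : G.component w = G.component v := by
  rw [mem_component] at h
  ext x
  simp only [mem_component]
  exact ⟨h.trans, (sameComp_symm h).trans⟩

theorem isComponent_component (v : V) : G.IsComponent (G.component v) :=
  ⟨v, rfl⟩

theorem IsComponent.component_eq (hT : G.IsComponent T) (hv : v ∈ T) : G.component v = T := by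
  obtain ⟨t, rfl⟩ := hT
  exact component_eq_of_mem hv

theorem IsComponent.nonempty (hT : G.IsComponent T) : T.Nonempty := by
  obtain ⟨t, rfl⟩ := hT
  exact ⟨t, mem_component_self t⟩

theorem NoSemiDirectedCycle.dirD_component (hG : G.NoSemiDirectedCycle) (h : G.dir v w) :
    G.dirD (G.component v) (G.component w) := by
  refine ⟨isComponent_component v, isComponent_component w, fun heq => hG v w h ?_,
    v, mem_component_self v, w, mem_component_self w, h⟩
  have hwv : G.sameComp w v := mem_component.1 (heq ▸ mem_component_self v)
  exact Relation.ReflTransGen.mono (fun _ _ => Or.inr) _ _ hwv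

theorem mem_pre : v ∈ G.pre ord T ↔ ord T (G.component v) := by
  simp [pre]

theorem IsComponent.ord_of_subset_pre (hT : G.IsComponent T) (h : T ⊆ G.pre ord S) : ord S T := by
  obtain ⟨v, hv⟩ := hT.nonempty
  simpa only [mem_pre, hT.component_eq hv] using h hv

theorem ConsistentOrder.ord_of_dirD (ho : G.ConsistentOrder ord) (h : G.dirD S T) : ord T S :=
  (ho.1 S T h.1 h.2.1 h.2.2.1).resolve_left fun hST => ho.2.2.2 S T h.1 h.2.1 hST h

theorem ConsistentOrder.disjoint_pre (ho : G.ConsistentOrder ord) (hT : G.IsComponent T) :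
    Disjoint T (G.pre ord T) := by
  refine Finset.disjoint_left.2 fun v hvT hv => ho.2.1 T hT ?_
  simpa only [mem_pre, hT.component_eq hvT] using hv

end

theorem NoSemiDirectedCycle.dirD_of_mem_paG (hG : G.NoSemiDirectedCycle) (hT : G.IsComponent T)
    (hA : A ⊆ T) (hv : v ∈ G.paG A) : G.dirD (G.component v) T := by
  obtain ⟨-, w, hwA, hvw⟩ := (Finset.mem_filter.1 hv).2
  exact hT.component_eq (hA hwA) ▸ hG.dirD_component hvw

theorem NoSemiDirectedCycle.paG_subset_paG (hG : G.NoSemiDirectedCycle) (hT : G.IsComponent T)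
    (hA : A ⊆ T) : G.paG A ⊆ G.paG T := by
  intro v hv
  obtain ⟨-, w, hwA, hvw⟩ := (Finset.mem_filter.1 hv).2
  have hvT : v ∉ T := fun hvT => (hG.dirD_of_mem_paG hT hA hv).2.2.1 (hT.component_eq hvT)
  exact Finset.mem_filter.2 ⟨Finset.mem_univ v, hvT, w, hA hwA, hvw⟩

theorem ConsistentOrder.exists_sdiff_component_subset_pre (ho : G.ConsistentOrder ord)
    (hS : S.Nonempty) : ∃ t ∈ S, S \ G.component t ⊆ G.pre ord (G.component t) := by
  let R (v w : V) : Prop := ord (G.component v) (G.component w)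
  have : IsTrans V R := ⟨fun a b c => ho.2.2.1 _ _ _ (isComponent_component a)
    (isComponent_component b) (isComponent_component c)⟩
  have : Std.Irrefl R := ⟨fun a => ho.2.1 _ (isComponent_component a)⟩
  obtain ⟨t, htS, hmin⟩ := (Finite.wellFounded_of_trans_of_irrefl R).has_min S hS
  refine ⟨t, htS, fun w hw => mem_pre.2 ?_⟩
  obtain ⟨hwS, hwt⟩ := Finset.mem_sdiff.1 hw
  have hne : G.component t ≠ G.component w := fun h => hwt (h ▸ mem_component_self w)
  exact (ho.1 _ _ (isComponent_component t) (isComponent_component w) hne).resolve_right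
    (hmin w hwS)

/-- `S` is anterior: it is closed backwards along semi-directed paths, that is, it contains the
parents and the undirected neighbours of its nodes. -/
def IsAnterior (G : MixedGraph V) (S : Finset V) : Prop :=
  ∀ ⦃v w⦄, G.step v w → w ∈ S → v ∈ S

/-- `S` is a possible past of the chain component `T`: an anterior set disjoint from `T` and
containing the parents of `T`. This abstracts, without reference to any ordering, the properties
that the sets `pre(T)` of all consistent orderings share. -/
structure IsPast (G : MixedGraph V) (T S : Finset V) : Prop where
  isAnterior : G.IsAnterior S
  disjoint : Disjoint T S
  paG_subset : G.paG T ⊆ S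

section

omit [DecidableEq V]

theorem IsAnterior.component_subset (hS : G.IsAnterior S) (hv : v ∈ S) : G.component v ⊆ S := by
  intro w hw
  have path := mem_component.1 hw
  induction path with
  | refl => exact hv
  | tail hvb hbc ih => exact hS (.inr (G.undir_symm hbc)) (ih (mem_component.2 hvb))

theorem ConsistentOrder.isAnterior_pre (hG : G.NoSemiDirectedCycle) (ho : G.ConsistentOrder ord)
    (hT : G.IsComponent T) : G.IsAnterior (G.pre ord T) := by
  intro v w hvw hw
  rw [mem_pre] at hw ⊢
  rcases hvw with hdir | hundir
  · exact ho.2.2.1 _ _ _ hT (isComponent_component w) (isComponent_component v) hw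
      (ho.ord_of_dirD (hG.dirD_component hdir))
  · rwa [← component_eq_of_mem (mem_component.2 (.single hundir))]

end

theorem IsAnterior.paG_subset (hS : G.IsAnterior S) (hA : A ⊆ S) : G.paG A ⊆ S := by
  intro v hv
  obtain ⟨-, w, hwA, hvw⟩ := (Finset.mem_filter.1 hv).2
  exact hS (.inl hvw) (hA hwA)

theorem ConsistentOrder.isPast_pre (hG : G.NoSemiDirectedCycle) (ho : G.ConsistentOrder ord)
    (hT : G.IsComponent T) : G.IsPast T (G.pre ord T) where
  isAnterior := ho.isAnterior_pre hG hT
  disjoint := ho.disjoint_pre hT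
  paG_subset _ hv := mem_pre.2 (ho.ord_of_dirD (hG.dirD_of_mem_paG hT subset_rfl hv))

theorem IsAnterior.sdiff (hG : G.NoSemiDirectedCycle) (ho : G.ConsistentOrder ord)
    (hS : G.IsAnterior S) (hT : G.IsComponent T) (hpast : S \ T ⊆ G.pre ord T) :
    G.IsAnterior (S \ T) := by
  intro v w hvw hw
  obtain ⟨hwS, hwT⟩ := Finset.mem_sdiff.1 hw
  refine Finset.mem_sdiff.2 ⟨hS hvw hwS, fun hvT => ?_⟩
  rcases hvw with hdir | hundir
  · exact ho.2.2.2 T _ hT (isComponent_component w) (mem_pre.1 (hpast hw))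
      (hT.component_eq hvT ▸ hG.dirD_component hdir)
  · exact hwT (hT.component_eq hvT ▸ mem_component.2 (.single hundir))

theorem IsPast.sdiff (hG : G.NoSemiDirectedCycle) (ho : G.ConsistentOrder ord)
    (hS : G.IsPast T S) (hT : G.IsComponent T) (hB : G.IsComponent B)
    (hpast : S \ B ⊆ G.pre ord B) (hBT : ord B T) : G.IsPast T (S \ B) where
  isAnterior := hS.isAnterior.sdiff hG ho hB hpast
  disjoint := hS.disjoint.mono_right Finset.sdiff_subset
  paG_subset v hv := by
    refine Finset.mem_sdiff.2 ⟨hS.paG_subset hv, fun hvB => ho.2.2.2 B T hB hT hBT ?_⟩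
    exact hB.component_eq hvB ▸ hG.dirD_of_mem_paG hT subset_rfl hv

end MixedGraph

section Marginal

variable {p f g : Cell r → ℝ} {A B C S S' U W : Finset V}

theorem dependsOn_marginal (p : Cell r → ℝ) (S : Finset V) : DependsOn (marginal p S) S := by
  intro i j hij
  have same_slice (k : Cell r) : (∀ v ∈ S, k v = i v) ↔ ∀ v ∈ S, k v = j v :=
    forall₂_congr fun v hv => by rw [hij v hv]
  simp only [marginal, same_slice]

theorem dependsOn_condProb (p : Cell r → ℝ) (A B : Finset V) :
    DependsOn (condProb p A B) ↑(A ∪ B) := by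
  intro i j hij
  rw [condProb, condProb, dependsOn_marginal p (A ∪ B) hij,
    dependsOn_marginal p B fun v hv => hij v (Finset.mem_union_right A hv)]

theorem marginal_pos (hp : ∀ i, 0 < p i) (S : Finset V) (i : Cell r) : 0 < marginal p S i := by
  refine Finset.sum_pos' (fun j _ => ?_) ⟨i, Finset.mem_univ i, by simp [hp i]⟩
  split_ifs
  exacts [(hp j).le, le_rfl]

theorem marginal_mul_of_dependsOn (hg : DependsOn g W) :
    marginal (g * f) W = g * marginal f W := by
  funext i
  simp only [marginal, Pi.mul_apply, Finset.mul_sum, mul_ite, mul_zero]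
  refine Finset.sum_congr rfl fun j _ => ?_
  split_ifs with hji
  · rw [hg hji]
  · rfl

theorem marginal_marginal (p : Cell r → ℝ) (h : U ∪ W = Finset.univ) :
    marginal (marginal p U) W = marginal p (U ∩ W) := by
  funext i
  have glue (j k : Cell r) : ((∀ v ∈ W, j v = i v) ∧ ∀ v ∈ U, k v = j v) ↔
      j = U.piecewise k i ∧ ∀ v ∈ U ∩ W, k v = i v := by
    have cover (v : V) : v ∈ U ∨ v ∈ W := by simp [← Finset.mem_union, h]
    simp only [funext_iff, Finset.piecewise, Finset.mem_inter]
    grind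
  calc marginal (marginal p U) W i
      = ∑ j : Cell r, ∑ k : Cell r,
          if (∀ v ∈ W, j v = i v) ∧ ∀ v ∈ U, k v = j v then p k else 0 := by
        simp only [marginal, ite_and, Finset.sum_ite_irrel, Finset.sum_const_zero]
    _ = ∑ k : Cell r, ∑ j : Cell r, if j = U.piecewise k i then
          (if ∀ v ∈ U ∩ W, k v = i v then p k else 0) else 0 := by
        rw [Finset.sum_comm]
        simp only [glue, ite_and]
    _ = marginal p (U ∩ W) i := by
        simp only [Finset.sum_ite_eq', Finset.mem_univ, if_true, marginal]

theorem condProb_eq_iff (hp : ∀ i, 0 < p i) :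
    condProb p A S = f ↔ marginal p (A ∪ S) = f * marginal p S := by
  simp only [funext_iff, condProb, Pi.mul_apply, div_eq_iff (marginal_pos hp S _).ne']

theorem condProb_empty_left (hp : ∀ i, 0 < p i) (S : Finset V) : condProb p ∅ S = 1 := by
  rw [condProb_eq_iff hp, Finset.empty_union, one_mul]

theorem condProb_eq_of_subset (hp : ∀ i, 0 < p i) (hAS : Disjoint A S) (hS : S' ⊆ S)
    (hf : DependsOn f ↑(A ∪ S')) (h : condProb p A S = f) : condProb p A S' = f := by
  rw [condProb_eq_iff hp] at h ⊢
  have hA : ∀ v ∈ A, v ∉ S := fun v hv => Finset.disjoint_left.1 hAS hv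
  let W := (S \ S')ᶜ
  have hW : A ∪ S' ⊆ W := by grind [Finset.mem_compl]
  calc marginal p (A ∪ S')
      = marginal p ((A ∪ S) ∩ W) := by congr 1; grind [Finset.mem_compl]
    _ = marginal (marginal p (A ∪ S)) W := by
        rw [marginal_marginal p (by grind [Finset.mem_compl])]
    _ = f * marginal (marginal p S) W := by
        rw [h, marginal_mul_of_dependsOn (hf.mono (Finset.coe_subset.2 hW))]
    _ = f * marginal p (S ∩ W) := by rw [marginal_marginal p (by grind [Finset.mem_compl])]
    _ = f * marginal p S' := by congr 2; grind [Finset.mem_compl]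

theorem condProb_union_eq_symm (hp : ∀ i, 0 < p i)
    (h : condProb p B (A ∪ C) = condProb p B C) : condProb p A (B ∪ C) = condProb p A C := by
  have hBC : marginal p (B ∪ C) = condProb p B C * marginal p C := (condProb_eq_iff hp).1 rfl
  have hAC : marginal p (A ∪ C) = condProb p A C * marginal p C := (condProb_eq_iff hp).1 rfl
  rw [condProb_eq_iff hp] at h ⊢
  rw [Finset.union_left_comm, h, hBC, hAC, mul_left_comm]

theorem condIndep_sdiff_iff (hp : ∀ i, 0 < p i) (hS : S' ⊆ S) :
    CondIndep p A (S \ S') S' ↔ condProb p A S = condProb p A S' := by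
  simp only [CondIndep, Finset.union_assoc, Finset.sdiff_union_of_subset hS, funext_iff, condProb,
    div_eq_div_iff (marginal_pos hp S _).ne' (marginal_pos hp S' _).ne']

end Marginal

section Regression

variable {G : MixedGraph V} {ord : Finset V → Finset V → Prop} {p : Cell r → ℝ}
  {A B S S' T : Finset V}

/-- The product `∏ p_{B | pa_G(B)}` over the connected components `B` of `A`: the conditional law
that the multivariate regression Markov property prescribes for `A` given the past. -/
noncomputable def regressionProd (G : MixedGraph V) (p : Cell r → ℝ) (A : Finset V) :
    Cell r → ℝ :=
  ∏ B ∈ G.connComps A, condProb p B (G.paG B)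

/-- Given `S`, the component `T` follows the regressions encoded by `G`: every `A ⊆ T` has
conditional law `regressionProd G p A`. Both (MR1) and (MR2) are instances, for `A` connected and
`A` disconnected. -/
def FollowsRegressions (G : MixedGraph V) (p : Cell r → ℝ) (T S : Finset V) : Prop :=
  ∀ A ⊆ T, condProb p A S = regressionProd G p A

theorem regressionProd_of_connectedIn (hA : G.ConnectedIn A) :
    regressionProd G p A = condProb p A (G.paG A) := by
  rw [regressionProd, hA.connComps_eq, Finset.prod_singleton]

theorem regressionProd_empty : regressionProd G p ∅ = 1 := by
  simp [regressionProd, MixedGraph.connComps]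

theorem dependsOn_regressionProd (hG : G.NoSemiDirectedCycle) (hT : G.IsComponent T)
    (hA : A ⊆ T) : DependsOn (regressionProd G p A) ↑(A ∪ G.paG T) := by
  intro i j hij
  simp only [regressionProd, Finset.prod_apply]
  refine Finset.prod_congr rfl fun B hB => dependsOn_condProb p B (G.paG B) fun v hv => hij v ?_
  have hBA := MixedGraph.subset_of_mem_connComps hB
  exact Finset.union_subset_union hBA (hG.paG_subset_paG hT (hBA.trans hA)) hv

theorem regressionProd_eq_prod_condProb
    (h : ∀ B ⊆ A, G.ConnectedIn B → condProb p B S = condProb p B (G.paG B)) :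
    regressionProd G p A = ∏ B ∈ G.connComps A, condProb p B S :=
  Finset.prod_congr rfl fun B hB =>
    (h B (MixedGraph.subset_of_mem_connComps hB) (MixedGraph.connectedIn_of_mem_connComps hB)).symm

theorem mrMarkov_iff_followsRegressions_pre (hG : G.NoSemiDirectedCycle)
    (ho : G.ConsistentOrder ord) (hp : ∀ i, 0 < p i) :
    MRMarkov G ord p ↔ ∀ T, G.IsComponent T → FollowsRegressions G p T (G.pre ord T) := by
  refine forall₂_congr fun T hT => ?_
  have paG_subset_pre (A) (hA : A ⊆ T) : G.paG A ⊆ G.pre ord T :=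
    (hG.paG_subset_paG hT hA).trans (ho.isPast_pre hG hT).paG_subset
  constructor
  · intro h A hA
    have connected_case (B) (hB : B ⊆ T) (hconn : G.ConnectedIn B) :
        condProb p B (G.pre ord T) = condProb p B (G.paG B) :=
      (condIndep_sdiff_iff hp (paG_subset_pre B hB)).1 ((h B hB hconn.1).1 hconn)
    rcases A.eq_empty_or_nonempty with rfl | hne
    · rw [condProb_empty_left hp, regressionProd_empty]
    by_cases hconn : G.ConnectedIn A
    · rw [connected_case A hA hconn, regressionProd_of_connectedIn hconn]
    · rw [regressionProd_eq_prod_condProb fun B hB => connected_case B (hB.trans hA)]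
      funext i
      rw [(h A hA hne).2 hconn i, Finset.prod_apply]
  · intro h A hA _
    have connected_case (B) (hB : B ⊆ T) (hconn : G.ConnectedIn B) :
        condProb p B (G.pre ord T) = condProb p B (G.paG B) :=
      (h B hB).trans (regressionProd_of_connectedIn hconn)
    refine ⟨fun hconn => (condIndep_sdiff_iff hp (paG_subset_pre A hA)).2
      (connected_case A hA hconn), fun _ i => ?_⟩
    rw [h A hA, regressionProd_eq_prod_condProb fun B hB => connected_case B (hB.trans hA),
      Finset.prod_apply]

theorem FollowsRegressions.of_subset (hG : G.NoSemiDirectedCycle) (hp : ∀ i, 0 < p i)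
    (hT : G.IsComponent T) (hTS : Disjoint T S) (hS : S' ⊆ S) (hpa : G.paG T ⊆ S')
    (h : FollowsRegressions G p T S) : FollowsRegressions G p T S' := fun A hA =>
  condProb_eq_of_subset hp (hTS.mono_left hA) hS ((dependsOn_regressionProd hG hT hA).mono
    (Finset.coe_subset.2 (Finset.union_subset_union_right hpa))) (h A hA)

theorem FollowsRegressions.of_sdiff (hp : ∀ i, 0 < p i) (hBS : B ⊆ S)
    (hT : FollowsRegressions G p T (S \ B))
    (hB : ∀ A ⊆ T, FollowsRegressions G p B (A ∪ S \ B)) : FollowsRegressions G p T S := by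
  intro A hA
  have hB_sdiff : condProb p B (S \ B) = regressionProd G p B := by
    simpa only [Finset.empty_union] using hB ∅ (Finset.empty_subset T) B subset_rfl
  have hB_drop : condProb p B (A ∪ S \ B) = condProb p B (S \ B) :=
    (hB A hA B subset_rfl).trans hB_sdiff.symm
  calc condProb p A S
      = condProb p A (B ∪ S \ B) := by rw [Finset.union_sdiff_of_subset hBS]
    _ = condProb p A (S \ B) := condProb_union_eq_symm hp hB_drop
    _ = regressionProd G p A := hT A hA

theorem followsRegressions_of_isPast (hG : G.NoSemiDirectedCycle) (ho : G.ConsistentOrder ord)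
    (hp : ∀ i, 0 < p i)
    (hpre : ∀ T, G.IsComponent T → FollowsRegressions G p T (G.pre ord T))
    (hT : G.IsComponent T) (hS : G.IsPast T S) : FollowsRegressions G p T S := by
  have of_subset_pre {C R : Finset V} (hC : G.IsComponent C) (hR : R ⊆ G.pre ord C)
      (hpa : G.paG C ⊆ R) : FollowsRegressions G p C R :=
    (hpre C hC).of_subset hG hp hC (ho.disjoint_pre hC) hR hpa
  induction S using Finset.strongInduction with
  | H S ih =>
    obtain ⟨t, ht, hpast⟩ :=
      ho.exists_sdiff_component_subset_pre (hT.nonempty.mono (Finset.subset_union_left (s₂ := S)))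
    rcases Finset.mem_union.1 ht with htT | htS
    · rw [hT.component_eq htT, Finset.union_sdiff_cancel_left hS.disjoint] at hpast
      exact of_subset_pre hT hpast hS.paG_subset
    · set C := G.component t
      have hC : G.IsComponent C := G.isComponent_component t
      have hCS : C ⊆ S := hS.isAnterior.component_subset htS
      have hTC : Disjoint T C := hS.disjoint.mono_right hCS
      rw [Finset.union_sdiff_distrib, hTC.sdiff_eq_left] at hpast
      obtain ⟨hTpre, hSpre⟩ := Finset.union_subset_iff.1 hpast
      have hpaC : G.paG C ⊆ S \ C := fun v hv => Finset.mem_sdiff.2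
        ⟨hS.isAnterior.paG_subset hCS hv, (Finset.mem_filter.1 hv).2.1⟩
      have hT_sdiff : FollowsRegressions G p T (S \ C) :=
        ih _ (Finset.sdiff_ssubset hCS hC.nonempty)
          (hS.sdiff hG ho hT hC hSpre (hT.ord_of_subset_pre hTpre))
      exact hT_sdiff.of_sdiff hp hCS fun A hA =>
        of_subset_pre hC (Finset.union_subset (hA.trans hTpre) hSpre)
          (hpaC.trans Finset.subset_union_right)

theorem mrMarkov_iff_forall_isPast (hG : G.NoSemiDirectedCycle) (ho : G.ConsistentOrder ord)
    (hp : ∀ i, 0 < p i) :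
    MRMarkov G ord p ↔
      ∀ T, G.IsComponent T → ∀ S, G.IsPast T S → FollowsRegressions G p T S := by
  rw [mrMarkov_iff_followsRegressions_pre hG ho hp]
  exact ⟨fun h _ hT _ hS => followsRegressions_of_isPast hG ho hp h hT hS,
    fun h T hT => h T hT _ (ho.isPast_pre hG hT)⟩

end Regression

/-- the multivariate regression Markov property does not
depend on the chosen consistent strict total ordering of the chain
components: `p` obeys it w.r.t. `ord₁` iff it obeys it w.r.t. `ord₂`. -/
theorem mr_markov_order_invariant
    {V : Type*} [Fintype V] [DecidableEq V] {r : V → ℕ} (hr : ∀ v, 2 ≤ r v)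
    (G : MixedGraph V) (hG : G.NoSemiDirectedCycle)
    (ord₁ ord₂ : Finset V → Finset V → Prop)
    (hord₁ : G.ConsistentOrder ord₁) (hord₂ : G.ConsistentOrder ord₂)
    (p : Cell r → ℝ) (hp : IsPosPMF p) :
    MRMarkov G ord₁ p ↔ MRMarkov G ord₂ p := by
  rw [mrMarkov_iff_forall_isPast hG hord₁ hp.1, mrMarkov_iff_forall_isPast hG hord₂ hp.1]
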